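/- Let F be a field, B ≤ M(n,F) a matrix space, and d a positive integer. If W ≤ F^{nd} ≅ F^n ⊗ F^d is an s′-shrunk subspace of the (d,d)-blow-up B^{(d,d)}, then there exists an s-shrunk subspace U ≤ F^n of B with sd ≥ s′ and W ⊆ U ⊗ F^d. -/

import Mathlib

open Matrix Kronecker

/-- The (k,ℓ)-blow-up of a matrix space `B ≤ M(n,F)`. -/
def blowUp {F : Type} [Field F] {n : ℕ} (B : Submodule F (Matrix (Fin n) (Fin n) F))
    (k ℓ : ℕ) : Submodule F (Matrix (Fin n × Fin k) (Fin n × Fin ℓ) F) :=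
  Submodule.span F {M | ∃ A ∈ B, ∃ T : Matrix (Fin k) (Fin ℓ) F, M = A ⊗ₖ T}

/-- `U` is an `s`-shrunk subspace of a space of matrices acting on `ι → F`. -/
def IsShrunkSubspace {F : Type} [Field F] {ι : Type} [Fintype ι]
    (B : Submodule F (Matrix ι ι F)) (U : Submodule F (ι → F)) (s : ℕ) : Prop :=
  Module.finrank F (Submodule.span F {v | ∃ A ∈ B, ∃ u ∈ U, v = A.mulVec u}) + s ≤
    Module.finrank F U

/-- The subspace `U ⊗ F^d` of `F^n ⊗ F^d ≅ F^{nd}`. -/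
def tensorPow {F : Type} [Field F] {n : ℕ} (U : Submodule F (Fin n → F)) (d : ℕ) :
    Submodule F (Fin n × Fin d → F) :=
  Submodule.span F {v | ∃ u ∈ U, ∃ w : Fin d → F, v = fun p => u p.1 * w p.2}

/-- The `j`-th slice `F^n ⊗ F^d → F^n`. -/
def slice (F : Type) [Field F] (n : ℕ) {d : ℕ} (j : Fin d) :
    (Fin n × Fin d → F) →ₗ[F] (Fin n → F) :=
  LinearMap.funLeft F F fun i => (i, j)

/-- The identification of `d`-tuples in `F^n` with `F^n ⊗ F^d`. -/
def unslice (F : Type) [Field F] (n d : ℕ) :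
    (Fin d → Fin n → F) →ₗ[F] (Fin n × Fin d → F) where
  toFun f p := f p.2 p.1
  map_add' _ _ := rfl
  map_smul' _ _ := rfl

/-- The span of all slices of elements of `W`. -/
def sliceSpan {F : Type} [Field F] {n d : ℕ} (W : Submodule F (Fin n × Fin d → F)) :
    Submodule F (Fin n → F) :=
  ⨆ j, W.map (slice F n j)

/-- The image `B(U)` of a subspace under a space of matrices. -/
def spaceImage {F : Type} [Field F] {ι : Type} [Fintype ι]
    (B : Submodule F (Matrix ι ι F)) (U : Submodule F (ι → F)) : Submodule F (ι → F) :=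
  Submodule.span F {v | ∃ A ∈ B, ∃ u ∈ U, v = A.mulVec u}

lemma slice_mem_sliceSpan {F : Type} [Field F] {n d : ℕ}
    {W : Submodule F (Fin n × Fin d → F)} {w : Fin n × Fin d → F} (hw : w ∈ W) (j : Fin d) :
    slice F n j w ∈ sliceSpan W :=
  Submodule.mem_iSup_of_mem j (Submodule.mem_map_of_mem hw)

lemma le_tensorPow_sliceSpan {F : Type} [Field F] {n d : ℕ}
    (W : Submodule F (Fin n × Fin d → F)) : W ≤ tensorPow (sliceSpan W) d := by
  intro w hw
  have h : w = ∑ j, fun p : Fin n × Fin d =>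
      slice F n j w p.1 * Pi.single (M := fun _ => F) j 1 p.2 := by
    ext p
    simp [slice, LinearMap.funLeft_apply, Pi.single_apply]
  rw [h]
  exact Submodule.sum_mem _ fun j _ =>
    Submodule.subset_span ⟨_, slice_mem_sliceSpan hw j, _, rfl⟩

lemma finrank_le_mul_finrank_sliceSpan {F : Type} [Field F] {n d : ℕ}
    (W : Submodule F (Fin n × Fin d → F)) :
    Module.finrank F W ≤ d * Module.finrank F (sliceSpan W) := by
  let g : W →ₗ[F] (Fin d → sliceSpan W) := LinearMap.pi fun j =>
    ((slice F n j).comp W.subtype).codRestrict _ fun w => slice_mem_sliceSpan w.2 j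
  have hg : Function.Injective g := by
    intro x y hxy
    ext p
    exact congrFun (congrArg Subtype.val (congrFun hxy p.2)) p.1
  simpa [Module.finrank_pi_fintype] using LinearMap.finrank_le_finrank_of_injective hg

lemma kronecker_single_mulVec {F : Type} [Field F] {n d : ℕ} (A : Matrix (Fin n) (Fin n) F)
    (k j : Fin d) (w : Fin n × Fin d → F) :
    (A ⊗ₖ Matrix.single k j (1 : F)).mulVec w =
      unslice F n d (Pi.single k (A.mulVec (slice F n j w))) := by
  ext ⟨i, l⟩
  by_cases h : l = k
  · subst h
    simp [unslice, slice, LinearMap.funLeft_apply, Matrix.mulVec, dotProduct,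
      Fintype.sum_prod_type, Matrix.single_apply]
  · simp [unslice, Matrix.mulVec, dotProduct, h, Ne.symm h]

lemma unslice_single_mem_spaceImage {F : Type} [Field F] {n d : ℕ}
    (B : Submodule F (Matrix (Fin n) (Fin n) F)) (W : Submodule F (Fin n × Fin d → F))
    (k : Fin d) {v : Fin n → F} (hv : v ∈ spaceImage B (sliceSpan W)) :
    unslice F n d (Pi.single k v) ∈ spaceImage (blowUp B d d) W := by
  let e := (unslice F n d).comp (LinearMap.single F (fun _ : Fin d => Fin n → F) k)
  suffices h : spaceImage B (sliceSpan W) ≤ (spaceImage (blowUp B d d) W).comap e from h hv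
  refine Submodule.span_le.2 ?_
  rintro _ ⟨A, hA, u, hu, rfl⟩
  suffices h : sliceSpan W ≤ (spaceImage (blowUp B d d) W).comap (e.comp A.mulVecLin) from h hu
  refine iSup_le fun j => Submodule.map_le_iff_le_comap.2 fun w hw => ?_
  exact Submodule.subset_span ⟨_, Submodule.subset_span ⟨A, hA, Matrix.single k j 1, rfl⟩, w, hw,
    (kronecker_single_mulVec A k j w).symm⟩

lemma mul_finrank_spaceImage_le {F : Type} [Field F] {n d : ℕ}
    (B : Submodule F (Matrix (Fin n) (Fin n) F)) (W : Submodule F (Fin n × Fin d → F)) :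
    d * Module.finrank F (spaceImage B (sliceSpan W)) ≤
      Module.finrank F (spaceImage (blowUp B d d) W) := by
  let g : (Fin d → spaceImage B (sliceSpan W)) →ₗ[F] spaceImage (blowUp B d d) W :=
    ((unslice F n d).comp
      (LinearMap.pi fun k => (Submodule.subtype _).comp (LinearMap.proj k))).codRestrict _ (by
        intro f
        rw [LinearMap.comp_apply, ← Finset.univ_sum_single (LinearMap.pi _ f), map_sum]
        exact Submodule.sum_mem _ fun k _ => unslice_single_mem_spaceImage B W k (f k).2)
  have hg : Function.Injective g := by
    intro x y hxy
    ext k i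
    exact congrFun (congrArg Subtype.val hxy) (i, k)
  simpa [Module.finrank_pi_fintype] using LinearMap.finrank_le_finrank_of_injective hg

/-- If `W` is an `s′`-shrunk subspace of the `(d,d)`-blow-up of `B`, then there is an
`s`-shrunk subspace `U` of `B` with `s·d ≥ s′` and `W ⊆ U ⊗ F^d`. -/
theorem stmt3 {F : Type} [Field F] {n : ℕ}
    (B : Submodule F (Matrix (Fin n) (Fin n) F))
    (d : ℕ) (hd : 0 < d)
    (W : Submodule F (Fin n × Fin d → F)) (s' : ℕ)
    (hW : IsShrunkSubspace (blowUp B d d) W s') :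
    ∃ (U : Submodule F (Fin n → F)) (s : ℕ),
      IsShrunkSubspace B U s ∧ s' ≤ s * d ∧ W ≤ tensorPow U d := by
  have h₁ := finrank_le_mul_finrank_sliceSpan W
  have h₂ := mul_finrank_spaceImage_le B W
  have h₃ : Module.finrank F (spaceImage (blowUp B d d) W) + s' ≤ Module.finrank F W := hW
  have h₄ : Module.finrank F (spaceImage B (sliceSpan W)) ≤ Module.finrank F (sliceSpan W) :=
    Nat.le_of_mul_le_mul_left (by omega) hd
  obtain ⟨s, hs⟩ := Nat.exists_eq_add_of_le h₄
  refine ⟨sliceSpan W, s, hs.ge, ?_, le_tensorPow_sliceSpan W⟩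
  rw [hs] at h₁
  linarith
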